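/- Let H be a non-semisimple Hopf algebra over k of odd index n and ω ∈ k a primitive n-th root of unity. Then for every j ∈ Z_n, Σ_{(a,i) ∈ Z_2 × Z_n} (−1)^a ω^{−i} · dim H^ω_{a,i,j} = 0 in k. -/

import Mathlib

open scoped TensorProduct

/-- A group-like element of a coalgebra: a nonzero element `a` with `Δ a = a ⊗ a`. -/
def IsGroupLike (k : Type*) {H : Type*} [CommSemiring k] [AddCommMonoid H] [Module k H]
    [Coalgebra k H] (a : H) : Prop :=
  a ≠ 0 ∧ Coalgebra.comul (R := k) a = a ⊗ₜ[k] a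

/-- The convolution product on the dual of a coalgebra. -/
noncomputable def conv {k H : Type*} [CommSemiring k] [AddCommMonoid H] [Module k H]
    [Coalgebra k H] (f g : Module.Dual k H) : Module.Dual k H :=
  LinearMap.mul' k k ∘ₗ TensorProduct.map f g ∘ₗ Coalgebra.comul

/-- `l ∈ H*` is a right integral of `H*`: `l * β = β(1) • l` for the convolution product. -/
def IsRightIntegralDual (k : Type*) {H : Type*} [CommSemiring k] [Semiring H]
    [HopfAlgebra k H] (l : Module.Dual k H) : Prop :=
  ∀ f : Module.Dual k H, conv l f = f 1 • l

/-- `Λ ∈ H` is a left integral of `H`: `a * Λ = ε(a) • Λ` for all `a`. -/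
def IsLeftIntegral (k : Type*) {H : Type*} [CommSemiring k] [Semiring H]
    [HopfAlgebra k H] (L : H) : Prop :=
  ∀ a : H, a * L = Coalgebra.counit (R := k) a • L

/-- `Λ ∈ H` is a right integral of `H`: `Λ * a = ε(a) • Λ` for all `a`. -/
def IsRightIntegral (k : Type*) {H : Type*} [CommSemiring k] [Semiring H]
    [HopfAlgebra k H] (L : H) : Prop :=
  ∀ a : H, L * a = Coalgebra.counit (R := k) a • L

/-- `g` is the distinguished group-like element of `H`: it is group-like and
`β * λ = β(g) • λ` for some nonzero right integral `λ` of `H*`. -/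
def IsDistinguishedGroupLike (k : Type*) {H : Type*} [CommSemiring k] [Semiring H]
    [HopfAlgebra k H] (g : H) : Prop :=
  IsGroupLike k g ∧ ∃ l : Module.Dual k H, l ≠ 0 ∧ IsRightIntegralDual k l ∧
    ∀ f : Module.Dual k H, conv f l = f g • l

/-- `α` is the distinguished group-like element of `H*`: an algebra map `H → k` with
`Λ * a = α(a) • Λ` for some nonzero left integral `Λ` of `H`. -/
def IsDistinguishedGroupLikeDual (k : Type*) {H : Type*} [CommSemiring k] [Semiring H]
    [HopfAlgebra k H] (α : H →ₐ[k] k) : Prop :=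
  ∃ L : H, L ≠ 0 ∧ IsLeftIntegral k L ∧ ∀ a : H, L * a = α a • L

/-- `IsHopfIndex k g n` : `n` is the index of the Hopf algebra `H` with distinguished
group-like element `g`, i.e. the smallest positive integer `n` with `S ^ (4 n) = id` and
`g ^ n = 1`, where `S` is the antipode. -/
def IsHopfIndex (k : Type*) {H : Type*} [CommSemiring k] [Semiring H] [HopfAlgebra k H]
    (g : H) (n : ℕ) : Prop :=
  0 < n ∧ (HopfAlgebra.antipode (R := k) (A := H) : Module.End k H) ^ (4 * n) = 1 ∧ g ^ n = 1 ∧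
    ∀ m : ℕ, 0 < m → (HopfAlgebra.antipode (R := k) (A := H) : Module.End k H) ^ (4 * m) = 1 →
      g ^ m = 1 → n ≤ m

/-- The simultaneous eigenspace `H^ω_{a,i,j} = {u ∈ H | S² u = (-1)^a ω^i • u, u * g = ω^j • u}`
for `(a,i,j) ∈ ℤ/2 × ℤ/n × ℤ/n`. -/
noncomputable def hopfEigenspace {k H : Type*} [CommRing k] [Ring H] [HopfAlgebra k H]
    (g : H) (ω : k) {n : ℕ} (t : ZMod 2 × ZMod n × ZMod n) : Submodule k H :=
  Module.End.eigenspace ((HopfAlgebra.antipode (R := k) (A := H) : Module.End k H) ^ 2)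
      ((-1 : k) ^ t.1.val * ω ^ t.2.1.val) ⊓
    Module.End.eigenspace (LinearMap.mulRight k g : Module.End k H) (ω ^ t.2.2.val)

/-- Convolution powers of an element of the dual; the zeroth power is the counit,
the unit of the convolution algebra. -/
noncomputable def convPow {k H : Type*} [CommSemiring k] [AddCommMonoid H] [Module k H]
    [Coalgebra k H] (f : Module.Dual k H) : ℕ → Module.Dual k H
  | 0 => Coalgebra.counit
  | m + 1 => conv f (convPow f m)

open Coalgebra HopfAlgebra

section HopfAlgebra

variable {k H : Type*} [Field k] [Ring H] [HopfAlgebra k H]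

/-- The linear map `x ↦ x₁ ⊗ S(x₂)` on a Hopf algebra. -/
noncomputable def comulAntipode (k H : Type*) [Field k] [Ring H] [HopfAlgebra k H] :
    H →ₗ[k] H ⊗[k] H :=
  (antipode k).lTensor H ∘ₗ comul

lemma comulAntipode_apply {x : H} {ι : Type*} (r : Repr k x ι) :
    comulAntipode k H x = ∑ i ∈ r.index, r.left i ⊗ₜ[k] antipode k (r.right i) := by
  simp [comulAntipode, ← r.eq]

/-- In Sweedler notation, `h₁ ⊗ S(h₂) h₃ = h ⊗ 1`. -/
lemma sum_comulAntipode_mul (h : H) :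
    ∑ i ∈ (ℛ k h).index,
      comulAntipode k H ((ℛ k h).left i) * (1 ⊗ₜ[k] (ℛ k h).right i) = h ⊗ₜ[k] 1 := by
  have key := congr(((LinearMap.mul' k H ∘ₗ (antipode k).rTensor H).lTensor H)
    $(sum_tmul_tmul_eq (ℛ k h) (fun i => ℛ k ((ℛ k h).left i))
      (fun i => ℛ k ((ℛ k h).right i))))
  simp only [map_sum, LinearMap.lTensor_tmul, LinearMap.comp_apply, LinearMap.rTensor_tmul,
    LinearMap.mul'_apply] at key
  simp only [comulAntipode_apply (ℛ k _), Finset.sum_mul, Algebra.TensorProduct.tmul_mul_tmul,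
    mul_one]
  rw [key]
  simp only [← TensorProduct.tmul_sum, sum_antipode_mul_eq_algebraMap_counit]
  simpa only [map_sum, LinearMap.lTensor_tmul, Algebra.linearMap_apply, map_one] using
    congr((Algebra.linearMap k H).lTensor H $(sum_tmul_counit_eq (ℛ k h)))

/-- In Sweedler notation, `h₁x₁ ⊗ S(h₂x₂) h₃ = h x₁ ⊗ S(x₂)`. -/
lemma sum_comulAntipode_mul_mul (h x : H) :
    ∑ i ∈ (ℛ k h).index,
      comulAntipode k H ((ℛ k h).left i * x) * (1 ⊗ₜ[k] (ℛ k h).right i) =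
      (h ⊗ₜ[k] 1) * comulAntipode k H x := by
  have hmul (y : H) : comulAntipode k H (y * x) =
      ∑ j ∈ (ℛ k x).index, (TensorProduct.map (LinearMap.mulRight k ((ℛ k x).left j))
        (LinearMap.mulLeft k (antipode k ((ℛ k x).right j)))) (comulAntipode k H y) := by
    rw [comulAntipode_apply ((ℛ k y).mul (ℛ k x)), comulAntipode_apply (ℛ k y)]
    simp [Finset.sum_product_right, antipode_mul_antidistrib]
  have hcomm (a b c : H) (t : H ⊗[k] H) :
      TensorProduct.map (LinearMap.mulRight k a) (LinearMap.mulLeft k b) t * (1 ⊗ₜ[k] c) =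
      TensorProduct.map (LinearMap.mulRight k a) (LinearMap.mulLeft k b) (t * (1 ⊗ₜ[k] c)) := by
    induction t with
    | zero => simp
    | tmul => simp [mul_assoc]
    | add _ _ h₁ h₂ => simp only [map_add, add_mul, h₁, h₂]
  simp only [hmul, Finset.sum_mul, hcomm]
  rw [Finset.sum_comm]
  simp only [← map_sum, sum_comulAntipode_mul, comulAntipode_apply (ℛ k x), Finset.mul_sum]
  simp

lemma IsLeftIntegral.tmul_mul_comulAntipode {L : H} (hL : IsLeftIntegral k L) (h : H) :
    (h ⊗ₜ[k] 1) * comulAntipode k H L = comulAntipode k H L * (1 ⊗ₜ[k] h) := by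
  rw [← sum_comulAntipode_mul_mul]
  simp only [hL _, map_smul, smul_mul_assoc, ← mul_smul_comm, ← Finset.mul_sum,
    ← TensorProduct.tmul_smul, ← TensorProduct.tmul_sum, sum_counit_smul]

/-- Maschke's theorem for Hopf algebras. -/
theorem IsLeftIntegral.isSemisimpleRing {L : H} (hL : IsLeftIntegral k L)
    (hε : counit (R := k) L ≠ 0) : IsSemisimpleRing H := by
  refine { exists_isCompl := fun N => ?_ }
  obtain ⟨q, hq⟩ : ∃ q : H →ₗ[k] N, ∀ y : N, q y = y := by
    obtain ⟨q, hq⟩ := (N.restrictScalars k).subtype.exists_leftInverse_of_injective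
      (Submodule.ker_subtype _)
    exact ⟨q, fun y => congr($hq y)⟩
  let Φ (x : H) : H ⊗[k] H →ₗ[k] N := TensorProduct.lift
    (LinearMap.mk₂ k (fun a b => a • q (b * x))
      (fun a b c => add_smul a b _) (fun r a b => smul_assoc r a _)
      (fun a b c => by simp only [add_mul, map_add, smul_add])
      (fun r a b => by simp only [smul_mul_assoc, map_smul, smul_algebra_smul_comm]))
  have hΦ (x a b : H) : Φ x (a ⊗ₜ b) = a • q (b * x) := rfl
  have hleft (h x : H) (t : H ⊗[k] H) : Φ x ((h ⊗ₜ[k] 1) * t) = h • Φ x t := by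
    induction t with
    | zero => simp
    | tmul a b => simp [hΦ, mul_smul]
    | add _ _ h₁ h₂ => simp only [mul_add, map_add, smul_add, h₁, h₂]
  have hright (h x : H) (t : H ⊗[k] H) : Φ x (t * (1 ⊗ₜ[k] h)) = Φ (h * x) t := by
    induction t with
    | zero => simp
    | tmul a b => simp [hΦ, mul_assoc]
    | add _ _ h₁ h₂ => simp only [add_mul, map_add, h₁, h₂]
  let P : H →ₗ[H] N :=
    { toFun := fun x => (counit (R := k) L)⁻¹ • Φ x (comulAntipode k H L)
      map_add' := fun x y => by
        rw [← smul_add]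
        congr 1
        rw [comulAntipode_apply (ℛ k L)]
        simp only [map_sum, hΦ, mul_add, map_add, smul_add, Finset.sum_add_distrib]
      map_smul' := fun h x => by
        rw [smul_eq_mul, ← hright, ← hL.tmul_mul_comulAntipode, hleft, RingHom.id_apply,
          smul_algebra_smul_comm] }
  refine ⟨LinearMap.ker P, LinearMap.isCompl_of_proj fun x => ?_⟩
  have hqN (b : H) : q (b * x) = b • x := hq (b • x)
  change (counit (R := k) L)⁻¹ • Φ x (comulAntipode k H L) = x
  rw [comulAntipode_apply (ℛ k L)]
  simp only [map_sum, hΦ, hqN, ← mul_smul, ← Finset.sum_smul, sum_mul_antipode_eq_smul]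
  rw [smul_assoc, one_smul, smul_smul, inv_mul_cancel₀ hε, one_smul]

/-- The linear map `x ↦ p(x₁) S²(x₂) v`. -/
noncomputable def comulSqAntipode (p : Module.Dual k H) (v : H) : Module.End k H :=
  TensorProduct.lift (p.smulRight (LinearMap.mulRight k v ∘ₗ antipode k)) ∘ₗ comulAntipode k H

lemma comulSqAntipode_mulLeft (p : Module.Dual k H) (v h : H) :
    comulSqAntipode (p ∘ₗ LinearMap.mulLeft k h) v = ∑ i ∈ (ℛ k h).index,
      LinearMap.mulLeft k (antipode k ((ℛ k h).right i)) * comulSqAntipode p v *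
        LinearMap.mulLeft k ((ℛ k h).left i) := by
  ext x
  have key := congr(TensorProduct.lift (p.smulRight (LinearMap.mulRight k v ∘ₗ antipode k))
    $(sum_comulAntipode_mul_mul (k := k) h x))
  have hl (t : H ⊗[k] H) :
      TensorProduct.lift (p.smulRight (LinearMap.mulRight k v ∘ₗ antipode k)) ((h ⊗ₜ[k] 1) * t) =
      TensorProduct.lift ((p ∘ₗ LinearMap.mulLeft k h).smulRight
        (LinearMap.mulRight k v ∘ₗ antipode k)) t := by
    induction t with
    | zero => simp
    | tmul a b => simp
    | add _ _ h₁ h₂ => simp only [mul_add, map_add, h₁, h₂]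
  have hr (c : H) (t : H ⊗[k] H) :
      TensorProduct.lift (p.smulRight (LinearMap.mulRight k v ∘ₗ antipode k)) (t * (1 ⊗ₜ[k] c)) =
      antipode k c *
        TensorProduct.lift (p.smulRight (LinearMap.mulRight k v ∘ₗ antipode k)) t := by
    induction t with
    | zero => simp
    | tmul a b => simp [antipode_mul_antidistrib, mul_assoc]
    | add _ _ h₁ h₂ => simp only [add_mul, mul_add, map_add, h₁, h₂]
  simp only [map_sum, hl, hr] at key
  simpa [comulSqAntipode, LinearMap.sum_apply] using key.symm

lemma trace_comulSqAntipode_mulLeft [FiniteDimensional k H] (p : Module.Dual k H) (v h : H) :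
    LinearMap.trace k H (comulSqAntipode (p ∘ₗ LinearMap.mulLeft k h) v) =
      counit (R := k) h * LinearMap.trace k H (comulSqAntipode p v) := by
  have hcyc (a b : H) : LinearMap.trace k H
      (LinearMap.mulLeft k b * comulSqAntipode p v * LinearMap.mulLeft k a) =
      LinearMap.trace k H (comulSqAntipode p v * Algebra.lmul k H (a * b)) := by
    rw [mul_assoc, LinearMap.trace_mul_comm, mul_assoc, map_mul (Algebra.lmul k H)]
    rfl
  rw [comulSqAntipode_mulLeft, map_sum]
  simp only [hcyc]
  rw [← map_sum, ← Finset.mul_sum, ← map_sum, sum_mul_antipode_eq_smul, map_smul, map_one,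
    mul_smul_comm, mul_one, map_smul, smul_eq_mul]

/-- The trace of `x ↦ S²(x) v` is `ε(L)` for some left integral `L`. -/
theorem exists_isLeftIntegral_counit_eq_trace [FiniteDimensional k H] (v : H) :
    ∃ L : H, IsLeftIntegral k L ∧
      counit (R := k) L = LinearMap.trace k H (LinearMap.mulRight k v * antipode k ^ 2) := by
  let τ : Module.Dual k (Module.Dual k H) :=
    { toFun := fun p => LinearMap.trace k H (comulSqAntipode p v)
      map_add' := fun p q => by
        rw [← map_add]; congr 1; ext x
        simp [comulSqAntipode, comulAntipode_apply (ℛ k x), add_smul, Finset.sum_add_distrib]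
      map_smul' := fun r p => by
        rw [RingHom.id_apply, ← map_smul]; congr 1; ext x
        simp [comulSqAntipode, comulAntipode_apply (ℛ k x), mul_smul, Finset.smul_sum] }
  obtain ⟨L, hL⟩ := (Module.evalEquiv k H).surjective τ
  have hp (p : Module.Dual k H) : p L = LinearMap.trace k H (comulSqAntipode p v) :=
    congr($hL p)
  refine ⟨L, fun h => ?_, ?_⟩
  · refine Module.eval_apply_injective k (LinearMap.ext fun p => ?_)
    have h₁ := hp (p ∘ₗ LinearMap.mulLeft k h)
    rw [trace_comulSqAntipode_mulLeft, ← hp] at h₁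
    simpa using h₁
  · rw [hp]
    congr 1
    ext x
    simp only [comulSqAntipode, LinearMap.comp_apply, comulAntipode_apply (ℛ k x), map_sum]
    simp only [pow_two, Module.End.mul_apply, TensorProduct.lift.tmul, LinearMap.smulRight_apply,
      LinearMap.smul_apply, ← map_smul, ← map_sum, LinearMap.comp_apply, sum_counit_smul]

theorem trace_mulRight_mul_sq_antipode [FiniteDimensional k H] (hss : ¬ IsSemisimpleRing H)
    (v : H) : LinearMap.trace k H (LinearMap.mulRight k v * antipode k ^ 2) = 0 := by
  obtain ⟨L, hL, hε⟩ := exists_isLeftIntegral_counit_eq_trace (k := k) v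
  by_contra h
  exact hss (hL.isSemisimpleRing (k := k) (by rwa [hε]))

end HopfAlgebra

section SpectralProjection

open Module.End

variable {k V : Type*} [Field k] [AddCommGroup V] [Module k V]

/-- For `A ^ N = 1` and `χ ^ N = 1`, the projection `N⁻¹ ∑ χ⁻ᵐ Aᵐ` onto the `χ`-eigenspace. -/
noncomputable def spectralProjection (N : ℕ) (A : Module.End k V) (χ : k) : Module.End k V :=
  (N : k)⁻¹ • ∑ m ∈ Finset.range N, (χ⁻¹ • A) ^ m

lemma mul_spectralProjection {N : ℕ} {A : Module.End k V} {χ : k} (hN : N ≠ 0)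
    (hA : A ^ N = 1) (hχ : χ ^ N = 1) :
    A * spectralProjection N A χ = χ • spectralProjection N A χ := by
  have hχ0 : χ ≠ 0 := by
    rintro rfl
    simp [hN] at hχ
  have hgeom := mul_geom_sum (χ⁻¹ • A) N
  rw [smul_pow, hA, inv_pow, hχ, inv_one, one_smul, sub_self, sub_mul, one_mul, sub_eq_zero,
    smul_mul_assoc, inv_smul_eq_iff₀ hχ0] at hgeom
  rw [spectralProjection, mul_smul_comm, hgeom, smul_comm]

lemma isProj_spectralProjection [CharZero k] {N : ℕ} {A : Module.End k V} {χ : k} (hN : N ≠ 0)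
    (hA : A ^ N = 1) (hχ : χ ^ N = 1) :
    LinearMap.IsProj (eigenspace A χ) (spectralProjection N A χ) where
  map_mem x := mem_eigenspace_iff.2 congr($(mul_spectralProjection hN hA hχ) x)
  map_id x hx := by
    have hχ0 : χ ≠ 0 := by
      rintro rfl
      simp [hN] at hχ
    have hfix (m : ℕ) : ((χ⁻¹ • A) ^ m) x = x := by
      induction m with
      | zero => simp
      | succ m ih =>
        rw [pow_succ, Module.End.mul_apply, LinearMap.smul_apply, mem_eigenspace_iff.1 hx,
          inv_smul_smul₀ hχ0, ih]
    simp [spectralProjection, LinearMap.sum_apply, hfix, ← Nat.cast_smul_eq_nsmul k, smul_smul, hN]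

lemma Commute.spectralProjection {A B : Module.End k V} (h : Commute A B) (M N : ℕ) (χ ψ : k) :
    Commute (spectralProjection M A χ) (spectralProjection N B ψ) := by
  refine Commute.smul_left (Commute.smul_right ?_ _) _
  exact Commute.sum_left _ _ _ fun i _ => Commute.sum_right _ _ _ fun j _ =>
    ((h.smul_left _).smul_right _).pow_pow i j

lemma LinearMap.IsProj.mul_of_commute {p q : Submodule k V} {P Q : Module.End k V}
    (hP : LinearMap.IsProj p P) (hQ : LinearMap.IsProj q Q) (h : Commute P Q) :
    LinearMap.IsProj (p ⊓ q) (P * Q) where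
  map_mem x := ⟨hP.map_mem _, by rw [h.eq]; exact hQ.map_mem _⟩
  map_id x hx := by rw [Module.End.mul_apply, hQ.map_id x hx.2, hP.map_id x hx.1]

lemma ZMod.sum_val_eq_sum_range {M : Type*} [AddCommMonoid M] (n : ℕ) [NeZero n] (f : ℕ → M) :
    ∑ i : ZMod n, f i.val = ∑ i ∈ Finset.range n, f i := by
  obtain _ | n := n
  · exact absurd rfl (NeZero.ne 0)
  · exact Fin.sum_univ_eq_sum_range f (n + 1)

lemma pow_eq_one_of_sign_mul {n : ℕ} {ω : k} (hω : ω ^ n = 1) (a i : ℕ) :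
    ((-1) ^ a * ω ^ i) ^ (2 * n) = 1 := by
  rw [mul_pow, ← pow_mul, ← pow_mul, mul_comm i, mul_comm a, mul_assoc, mul_assoc, pow_mul,
    mul_left_comm, pow_mul ω, hω]
  simp

lemma sum_inv_sign_mul_pow_eq_zero {n : ℕ} (hn : Odd n) [NeZero n] {ω : k}
    (hω : IsPrimitiveRoot ω n) {m : ℕ} (hm : m ≠ 0) (hmn : m < 2 * n) :
    ∑ t : ZMod 2 × ZMod n, ((-1 : k) ^ t.1.val * ω ^ t.2.val)⁻¹ ^ m = 0 := by
  have hsplit : ∑ t : ZMod 2 × ZMod n, ((-1 : k) ^ t.1.val * ω ^ t.2.val)⁻¹ ^ m =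
      (∑ a ∈ Finset.range 2, ((-1 : k) ^ m) ^ a) * ∑ i ∈ Finset.range n, (ω⁻¹ ^ m) ^ i := by
    rw [← ZMod.sum_val_eq_sum_range, ← ZMod.sum_val_eq_sum_range, Fintype.sum_mul_sum,
      Fintype.sum_prod_type]
    refine Finset.sum_congr rfl fun a _ => Finset.sum_congr rfl fun i _ => ?_
    rw [mul_inv, mul_pow, ← inv_pow, ← inv_pow, inv_neg_one, ← pow_mul, ← pow_mul, ← pow_mul,
      ← pow_mul, mul_comm m, mul_comm m]
  rw [hsplit]
  obtain hodd | heven := m.even_or_odd.symm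
  · simp [Finset.sum_range_succ, hodd.neg_one_pow]
  · have hne : ω⁻¹ ^ m ≠ 1 := fun h => by
      have hdvd := (hω.inv.pow_eq_one_iff_dvd m).1 h
      have := Nat.le_of_dvd (Nat.pos_of_ne_zero hm)
        (Nat.Coprime.mul_dvd_of_dvd_of_dvd (Nat.coprime_two_left.2 hn) heven.two_dvd hdvd)
      omega
    have hgeom := mul_neg_geom_sum (ω⁻¹ ^ m) n
    rw [pow_right_comm, hω.inv.pow_eq_one, one_pow, sub_self] at hgeom
    rw [(mul_eq_zero.1 hgeom).resolve_left (sub_ne_zero.2 hne.symm), mul_zero]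

lemma sum_spectralProjection [CharZero k] {n : ℕ} (hn : Odd n) [NeZero n] {ω : k}
    (hω : IsPrimitiveRoot ω n) (A : Module.End k V) :
    ∑ t : ZMod 2 × ZMod n,
      spectralProjection (2 * n) A ((-1 : k) ^ t.1.val * ω ^ t.2.val) = 1 := by
  simp only [spectralProjection, ← Finset.smul_sum]
  rw [Finset.sum_comm]
  simp only [smul_pow, ← Finset.sum_smul]
  rw [Finset.sum_eq_single 0 (fun m hm h0 => by
    rw [sum_inv_sign_mul_pow_eq_zero hn hω h0 (Finset.mem_range.1 hm), zero_smul])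
    (fun h => absurd (Finset.mem_range.2 (by have := NeZero.pos n; omega)) h)]
  have hn0 : (n : k) ≠ 0 := NeZero.ne _
  have hcancel : (n : k)⁻¹ * 2⁻¹ * (2 * n) = 1 := by field_simp
  simp [ZMod.card, smul_smul, hcancel]

/-- The trace of `A` on an eigenspace of a commuting operator is the sum of its eigenvalues,
counted with multiplicity. -/
lemma trace_mul_spectralProjection [CharZero k] [FiniteDimensional k V] {n : ℕ} (hn : Odd n)
    [NeZero n] {ω : k} (hω : IsPrimitiveRoot ω n) {A B : Module.End k V} (hAB : Commute A B)
    (hA : A ^ (2 * n) = 1) (hB : B ^ n = 1) {χ : k} (hχ : χ ^ n = 1) :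
    LinearMap.trace k V (spectralProjection n B χ * A) =
      ∑ t : ZMod 2 × ZMod n, (-1 : k) ^ t.1.val * ω ^ t.2.val *
        (Module.finrank k ↥(eigenspace A ((-1 : k) ^ t.1.val * ω ^ t.2.val) ⊓ eigenspace B χ) :
          k) := by
  have hn0 : n ≠ 0 := NeZero.ne n
  conv_lhs => rw [← mul_one A, ← sum_spectralProjection hn hω A, Finset.mul_sum, Finset.mul_sum,
    map_sum]
  refine Finset.sum_congr rfl fun t _ => ?_
  have hroot := pow_eq_one_of_sign_mul hω.pow_eq_one t.1.val t.2.val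
  rw [mul_spectralProjection (by omega) hA hroot, mul_smul_comm, map_smul, smul_eq_mul,
    LinearMap.trace_mul_comm,
    ((isProj_spectralProjection (by omega) hA hroot).mul_of_commute
      (isProj_spectralProjection hn0 hB hχ) (hAB.spectralProjection _ _ _ _)).trace]

/-- An integral linear relation between powers of a primitive root of unity is preserved
under inversion of the root. -/
lemma IsPrimitiveRoot.sum_intCast_mul_inv_pow_eq_zero [CharZero k] {n : ℕ} (hn : 0 < n) {ω : k}
    (hω : IsPrimitiveRoot ω n) {ι : Type*} {s : Finset ι} {c : ι → ℤ} {e : ι → ℕ}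
    (h : ∑ t ∈ s, (c t : k) * ω ^ e t = 0) : ∑ t ∈ s, (c t : k) * (ω ^ e t)⁻¹ = 0 := by
  let p : Polynomial ℤ := ∑ t ∈ s, Polynomial.C (c t) * Polynomial.X ^ e t
  have hp (x : k) : Polynomial.aeval x p = ∑ t ∈ s, (c t : k) * x ^ e t := by simp [p]
  have hdvd : minpoly ℤ ω ∣ p :=
    minpoly.isIntegrallyClosed_dvd (hω.isIntegral hn) (by rw [hp, h])
  rw [← Polynomial.cyclotomic_eq_minpoly hω hn,
    Polynomial.cyclotomic_eq_minpoly hω.inv hn] at hdvd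
  obtain ⟨q, hq⟩ := hdvd
  have := hp ω⁻¹
  rw [hq, map_mul, minpoly.aeval, zero_mul] at this
  simpa only [inv_pow] using this.symm

end SpectralProjection

lemma spectralProjection_mulRight {k H : Type*} [Field k] [Ring H] [Algebra k H] (n : ℕ) (g : H)
    (χ : k) : spectralProjection n (LinearMap.mulRight k g) χ =
      LinearMap.mulRight k ((n : k)⁻¹ • ∑ m ∈ Finset.range n, (χ⁻¹ • g) ^ m) := by
  ext x
  simp [spectralProjection, LinearMap.sum_apply, smul_pow, LinearMap.pow_mulRight, Finset.mul_sum]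

lemma commute_sq_antipode_mulRight {k H : Type*} [Field k] [Ring H] [HopfAlgebra k H] {g : H}
    (hg : IsGroupLike k g) :
    Commute (antipode k (A := H) ^ 2 : Module.End k H) (LinearMap.mulRight k g) := by
  have hg' : IsGroupLikeElem k g := by
    refine ⟨?_, hg.2⟩
    have h := congr(TensorProduct.lid k H $(rTensor_counit_comul (R := k) g))
    rw [hg.2] at h
    simp only [LinearMap.rTensor_tmul, TensorProduct.lid_tmul, one_smul] at h
    exact smul_left_injective k hg.1 (h.trans (one_smul k g).symm)
  ext x
  simp [pow_two, antipode_mul_antidistrib, hg'.antipode_antipode]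

/-- Lemma 4.3. Let `H` be a non-semisimple Hopf algebra of odd index `n`
over an algebraically closed field of characteristic `0` and `ω` a primitive `n`-th root of
unity. Then for every `j ∈ ℤ/n`,
`Σ_{(a,i) ∈ ℤ/2 × ℤ/n} (−1)^a ω^{−i} dim H^ω_{a,i,j} = 0` in `k`. -/
theorem stmt13 (k : Type*) [Field k] [IsAlgClosed k] [CharZero k]
    (n : ℕ) (hn : Odd n) [NeZero n]
    (H : Type*) [Ring H] [HopfAlgebra k H] [FiniteDimensional k H]
    (hss : ¬ IsSemisimpleRing H)
    (g : H) (hg : IsDistinguishedGroupLike k g) (hidx : IsHopfIndex k g n)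
    (ω : k) (hω : IsPrimitiveRoot ω n) :
    ∀ j : ZMod n,
      ∑ t : ZMod 2 × ZMod n,
        (-1 : k) ^ t.1.val * (ω ^ t.2.val)⁻¹ *
          (Module.finrank k (hopfEigenspace g ω (t.1, t.2, j)) : k) = 0 := by
  intro j
  obtain ⟨-, hS, hgn, -⟩ := hidx
  have hA : ((antipode k (A := H) : Module.End k H) ^ 2) ^ (2 * n) = 1 := by
    rw [← pow_mul, ← hS]
    congr 1
    ring
  have hB : (LinearMap.mulRight k g : Module.End k H) ^ n = 1 := by
    rw [LinearMap.pow_mulRight, hgn, LinearMap.mulRight_one]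
    rfl
  have hχ : (ω ^ j.val) ^ n = 1 := by rw [← pow_mul, mul_comm, pow_mul, hω.pow_eq_one, one_pow]
  have htr := trace_mul_spectralProjection hn hω (commute_sq_antipode_mulRight hg.1) hA hB hχ
  rw [spectralProjection_mulRight, trace_mulRight_mul_sq_antipode hss] at htr
  have hinv := hω.sum_intCast_mul_inv_pow_eq_zero (NeZero.pos n) (s := Finset.univ)
    (c := fun t : ZMod 2 × ZMod n =>
      (-1) ^ t.1.val * (Module.finrank k (hopfEigenspace g ω (t.1, t.2, j)) : ℤ))
    (e := fun t => t.2.val) (by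
      rw [htr]
      refine Finset.sum_congr rfl fun t _ => ?_
      push_cast
      rw [mul_right_comm]
      rfl)
  rw [← hinv]
  refine Finset.sum_congr rfl fun t _ => ?_
  push_cast
  rw [mul_right_comm]
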